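/- Let m ∈ ℕ, let α > 0, and let n ≥ m. Let x_1,…,x_m ∈ ℂ list the roots of L_m^{(α−1)} with multiplicity, i.e., L_m^{(α−1)}(X) = ((−1)^m/m!)·∏_{j=1}^m (X−x_j), and let z_1,…,z_{n−m} ∈ ℂ list the roots of L_{n−m}^{(α−1)} with multiplicity similarly. Set X_j = −x_j for 1 ≤ j ≤ m and X_{m+j} = z_j for 1 ≤ j ≤ n−m. For x ∈ ℂ let M(x) be the (n+1)×(n+1) matrix whose j-th row, for 1 ≤ j ≤ n, is (1, X_j, X_j², …, X_j^n), and whose last row is (1/α, x/(1+α), x²/(2+α), …, x^n/(n+α)). Then for every x ∈ ℂ, m!·(n−m)!·(∏_{1≤i<j≤n}(X_j−X_i))·L^{I,(α)}_{m,n}(x) = (−1)^{n−m}·(α+n)·det M(x); moreover the points X_1,…,X_n are pairwise distinct, so the Vandermonde factor ∏_{1≤i<j≤n}(X_j−X_i) is nonzero. -/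

import Mathlib

/-
Let `P` be the exceptional polynomial and `Q = L_m^{(α-1)}(-X) L_{n-m}^{(α-1)}(X)`, whose roots are
the `X_j`. The Laguerre differential equation and the contiguous relations give
`X P' + α P = (α + n) Q`, so `P` arises from `Q` by multiplying the coefficient of each `X^k` by
`(α + n) / (k + α)`. On the other hand, a Vandermonde matrix bordered by a last row `v` has
determinant equal to the Vandermonde determinant times the linear functional `X^k ↦ v_k` applied to
`∏ (X - X_j)`; the row `v_k = x^k / (k + α)` reproduces `P(x)`.

The `X_j` are distinct because the zeros of `L_m^{(α-1)}` and of `L_{n-m}^{(α-1)}` are simple, real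
and positive, so that those of the reflected factor are negative. All three properties come from the
three-term recurrence, the alternating signs of the coefficients and the identity
`L^{(α)} = L^{(α-1)} - d/dX L^{(α-1)}`.
-/

open Finset

/-- Generalized binomial coefficient `C(t, j) = t(t-1)⋯(t-j+1)/j!`. -/
noncomputable def genBinom (t : ℝ) (j : ℕ) : ℝ :=
  (∏ i ∈ Finset.range j, (t - i)) / (Nat.factorial j)

/-- Generalized Laguerre polynomial `L_n^{(α)}(x)` evaluated at complex `x`,
with the convention `L_n^{(α)} = 0` for negative integer index `n`. -/
noncomputable def laguerreC (α : ℝ) (n : ℤ) (x : ℂ) : ℂ :=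
  if 0 ≤ n then
    ∑ k ∈ Finset.range (n.toNat + 1),
      ((-1 : ℂ) ^ k / (Nat.factorial k)) * (genBinom ((n : ℝ) + α) (n.toNat - k) : ℂ) * x ^ k
  else 0

/-- Type-I exceptional `X_m`-Laguerre polynomial (complex variable). -/
noncomputable def XLagIC (m : ℕ) (α : ℝ) (n : ℕ) (x : ℂ) : ℂ :=
  laguerreC α (m : ℤ) (-x) * laguerreC (α - 1) ((n : ℤ) - m) x
    + laguerreC (α - 1) (m : ℤ) (-x) * laguerreC α ((n : ℤ) - m - 1) x

open Polynomial
open scoped ComplexConjugate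

theorem genBinom_eq_choose (t : ℝ) (j : ℕ) : genBinom t j = Ring.choose t j := by
  rw [genBinom, Ring.choose_eq_smul, ← aeval_eq_smeval, ← eval_map_algebraMap, descPochhammer_map,
    descPochhammer_eval_eq_prod_range, smul_eq_mul, div_eq_inv_mul]

theorem genBinom_succ_succ (t : ℝ) (j : ℕ) :
    genBinom (t + 1) (j + 1) = genBinom t j + genBinom t (j + 1) := by
  simp only [genBinom_eq_choose, Ring.choose_succ_succ]

theorem sub_mul_genBinom_add_one (t : ℝ) (j : ℕ) :
    (t + 1 - j) * genBinom (t + 1) j = (t + 1) * genBinom t j := by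
  have h : (∏ i ∈ range j, (t + 1 - i)) * (t + 1 - j) = (∏ i ∈ range j, (t - i)) * (t + 1) := by
    rw [← prod_range_succ, prod_range_succ']
    simp
  rw [genBinom, genBinom]
  linear_combination h / (j.factorial : ℝ)

theorem genBinom_pos {t : ℝ} {j : ℕ} (h : (j : ℝ) < t + 1) : 0 < genBinom t j := by
  refine div_pos (prod_pos fun i hi => ?_) (by positivity)
  have : (i : ℝ) + 1 ≤ j := mod_cast mem_range.mp hi
  linarith

/-- The generalized Laguerre polynomial `L_n^{(a)}`, as a polynomial. -/
noncomputable def laguerre (a : ℝ) (n : ℕ) : ℝ[X] :=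
  ∑ k ∈ range (n + 1), monomial k ((-1) ^ k / (k.factorial : ℝ) * genBinom (n + a) (n - k))

theorem aeval_laguerre (a : ℝ) (n : ℕ) (w : ℂ) : aeval w (laguerre a n) = laguerreC a n w := by
  simp [laguerre, laguerreC, aeval_monomial]

theorem coeff_laguerre (a : ℝ) (n k : ℕ) : (laguerre a n).coeff k =
    if k ≤ n then (-1) ^ k / (k.factorial : ℝ) * genBinom (n + a) (n - k) else 0 := by
  simp [laguerre, coeff_monomial]

theorem coeff_laguerre_of_lt (a : ℝ) {n k : ℕ} (h : n < k) : (laguerre a n).coeff k = 0 := by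
  rw [coeff_laguerre, if_neg h.not_ge]

theorem coeff_laguerre_add (a : ℝ) (k j : ℕ) : (laguerre a (k + j)).coeff k =
    (-1) ^ k / (k.factorial : ℝ) * genBinom (k + j + a) j := by
  simp [coeff_laguerre]

theorem laguerre_zero (a : ℝ) : laguerre a 0 = 1 := by
  simp [laguerre, genBinom]

theorem coeff_X_mul_derivative {R : Type*} [CommSemiring R] (p : R[X]) (k : ℕ) :
    (X * derivative p).coeff k = k * p.coeff k := by
  cases k with
  | zero => simp
  | succ k => rw [coeff_X_mul, coeff_derivative, mul_comm, Nat.cast_succ]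

theorem derivative_laguerre_succ (a : ℝ) (n : ℕ) :
    derivative (laguerre a (n + 1)) = -laguerre (a + 1) n := by
  ext k
  rw [coeff_derivative, coeff_neg]
  rcases lt_or_ge n k with h | h
  · rw [coeff_laguerre_of_lt _ h, coeff_laguerre_of_lt _ (by lia)]
    simp
  · obtain ⟨j, rfl⟩ := Nat.exists_eq_add_of_le h
    rw [add_right_comm, coeff_laguerre_add, coeff_laguerre_add, Nat.factorial_succ]
    push_cast
    rw [show (k : ℝ) + 1 + j + a = k + j + (a + 1) by ring]
    field_simp
    ring

theorem laguerre_add_one_eq_sub_derivative (a : ℝ) (n : ℕ) :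
    laguerre (a + 1) n = laguerre a n - derivative (laguerre a n) := by
  cases n with
  | zero => simp [laguerre_zero]
  | succ n =>
    rw [derivative_laguerre_succ, sub_neg_eq_add]
    ext k
    rw [coeff_add]
    rcases lt_trichotomy k (n + 1) with h | rfl | h
    · obtain ⟨j, rfl⟩ := Nat.exists_eq_add_of_le (Nat.lt_succ_iff.mp h)
      have pascal := genBinom_succ_succ (k + j + 1 + a) j
      rw [add_assoc k j 1, coeff_laguerre_add, coeff_laguerre_add, coeff_laguerre_add]
      push_cast
      ring_nf at pascal ⊢
      rw [pascal]
      ring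
    · simp [coeff_laguerre, genBinom]
    · simp [coeff_laguerre_of_lt, h, Nat.lt_of_succ_lt h]

theorem X_mul_derivative_laguerre_add_one (a : ℝ) (n : ℕ) :
    X * derivative (laguerre (a + 1) n) + C (a + 1) * laguerre (a + 1) n =
      C (n + a + 1) * laguerre a n := by
  ext k
  rw [coeff_add, coeff_X_mul_derivative, coeff_C_mul, coeff_C_mul]
  rcases lt_or_ge n k with h | h
  · simp [coeff_laguerre_of_lt, h]
  · obtain ⟨j, rfl⟩ := Nat.exists_eq_add_of_le h
    have absorb := sub_mul_genBinom_add_one (k + j + a) j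
    rw [coeff_laguerre_add, coeff_laguerre_add, ← add_assoc _ a 1]
    push_cast
    linear_combination ((-1) ^ k / (k.factorial : ℝ)) * absorb

theorem laguerre_ode (a : ℝ) (n : ℕ) :
    X * derivative (derivative (laguerre a n)) + (C (a + 1) - X) * derivative (laguerre a n)
      + C (n : ℝ) * laguerre a n = 0 := by
  have h := X_mul_derivative_laguerre_add_one a n
  simp only [laguerre_add_one_eq_sub_derivative, derivative_sub, map_add, map_one] at h ⊢
  linear_combination -h

theorem laguerre_succ_add_X_mul (a : ℝ) (n : ℕ) :
    C (n + 1 : ℝ) * laguerre a (n + 1) + X * laguerre (a + 1) n = C (n + a + 1) * laguerre a n := by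
  have ode := laguerre_ode a (n + 1)
  have h := X_mul_derivative_laguerre_add_one a n
  rw [derivative_laguerre_succ, derivative_neg, Nat.cast_succ] at ode
  linear_combination ode + h

theorem laguerre_one (a : ℝ) : laguerre a 1 = C (a + 1) - X := by
  have h := laguerre_succ_add_X_mul a 0
  simp only [laguerre_zero, Nat.cast_zero, zero_add, map_one, one_mul, mul_one] at h
  exact eq_sub_of_add_eq h

theorem laguerre_three_term (a : ℝ) (n : ℕ) :
    C (n + 2 : ℝ) * laguerre a (n + 2) =
      (C (2 * n + a + 3) - X) * laguerre a (n + 1) - C (n + a + 1) * laguerre a n := by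
  have h₀ := laguerre_succ_add_X_mul a n
  have h₁ := laguerre_succ_add_X_mul a (n + 1)
  have h := laguerre_add_one_eq_sub_derivative a (n + 1)
  rw [derivative_laguerre_succ] at h
  simp only [map_add, map_mul, map_natCast, map_one, map_ofNat, Nat.cast_succ] at *
  linear_combination h₁ - h₀ - X * h

section Roots

variable {a : ℝ}

theorem eval_laguerre_pos (ha : -1 < a) (n : ℕ) {r : ℝ} (hr : r ≤ 0) :
    0 < (laguerre a n).eval r := by
  have term_eq (k : ℕ) :
      (monomial k ((-1) ^ k / (k.factorial : ℝ) * genBinom (n + a) (n - k))).eval r =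
        genBinom (n + a) (n - k) * (-r) ^ k / k.factorial := by
    rw [eval_monomial, neg_pow r]
    ring
  have binom_pos {k : ℕ} (hk : k ∈ range (n + 1)) : 0 < genBinom (n + a) (n - k) := by
    refine genBinom_pos ?_
    rw [Nat.cast_sub (mem_range_succ_iff.mp hk)]
    linarith [k.cast_nonneg (α := ℝ)]
  have neg_r_nonneg : 0 ≤ -r := neg_nonneg.mpr hr
  simp only [laguerre, eval_finsetSum, term_eq]
  refine sum_pos' (fun k hk => ?_) ⟨0, by simp, ?_⟩
  · have := binom_pos hk
    positivity
  · simpa using binom_pos (mem_range.mpr n.succ_pos)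

-- Up to a negative constant, the left-hand side is `z.im ^ 2` times the Christoffel–Darboux kernel
-- at `(z, conj z)`, which is a positive combination of squared absolute values.
theorem im_mul_im_laguerre_succ_mul_conj_neg (ha : -1 < a) {z : ℂ} (hz : z.im ≠ 0) (n : ℕ) :
    z.im * (aeval z (laguerre a (n + 1)) * conj (aeval z (laguerre a n))).im < 0 := by
  induction n with
  | zero =>
    have im_sq_pos : 0 < z.im * z.im := mul_self_pos.mpr hz
    simpa [laguerre_zero, laguerre_one] using im_sq_pos
  | succ n ih =>
    set p := fun k => aeval z (laguerre a k)
    have recurrence : ((n + 2 : ℝ) : ℂ) * p (n + 2) =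
        (((2 * n + a + 3 : ℝ) : ℂ) - z) * p (n + 1) - ((n + a + 1 : ℝ) : ℂ) * p n := by
      simpa only [map_mul, map_sub, aeval_C, aeval_X, Complex.coe_algebraMap] using
        congrArg (aeval z) (laguerre_three_term a n)
    have step : (n + 2) * (z.im * (p (n + 2) * conj (p (n + 1))).im) =
        -(z.im ^ 2 * Complex.normSq (p (n + 1)))
          + (n + a + 1) * (z.im * (p (n + 1) * conj (p n)).im) := by
      have re_eq := congrArg Complex.re recurrence
      have im_eq := congrArg Complex.im recurrence
      simp only [Complex.mul_re, Complex.mul_im, Complex.sub_re, Complex.sub_im,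
        Complex.ofReal_re, Complex.ofReal_im, Complex.conj_re, Complex.conj_im,
        Complex.normSq_apply] at re_eq im_eq ⊢
      linear_combination z.im * ((p (n + 1)).re * im_eq - (p (n + 1)).im * re_eq)
    have coeff_pos : 0 < n + a + 1 := by linarith [n.cast_nonneg (α := ℝ)]
    have normSq_term : 0 ≤ z.im ^ 2 * Complex.normSq (p (n + 1)) :=
      mul_nonneg (sq_nonneg _) (Complex.normSq_nonneg _)
    have ih_term : (n + a + 1) * (z.im * (p (n + 1) * conj (p n)).im) < 0 :=
      mul_neg_of_pos_of_neg coeff_pos ih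
    exact neg_of_mul_neg_right (by linarith) (by positivity : (0 : ℝ) ≤ n + 2)

theorem im_eq_zero_of_aeval_laguerre_eq_zero (ha : -1 < a) {n : ℕ} {z : ℂ}
    (h : aeval z (laguerre a n) = 0) : z.im = 0 := by
  by_contra hz
  cases n with
  | zero => simp [laguerre_zero] at h
  | succ n => simpa [h] using im_mul_im_laguerre_succ_mul_conj_neg ha hz n

theorem re_pos_of_aeval_laguerre_eq_zero (ha : -1 < a) {n : ℕ} {z : ℂ}
    (h : aeval z (laguerre a n) = 0) : 0 < z.re := by
  have z_eq : z = (z.re : ℂ) := Complex.ext rfl (im_eq_zero_of_aeval_laguerre_eq_zero ha h)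
  have root : (laguerre a n).eval z.re = 0 := by
    rw [z_eq] at h
    exact Complex.ofReal_eq_zero.mp
      ((aeval_algebraMap_apply_eq_algebraMap_eval z.re (laguerre a n)).symm.trans h)
  by_contra! hre
  exact (eval_laguerre_pos ha n hre).ne' root

theorem aeval_laguerre_succ_ne_zero {K : Type*} [Field K] [Algebra ℝ K] (ha : -1 < a) {z : K}
    {n : ℕ} (h : aeval z (laguerre a n) = 0) : aeval z (laguerre a (n + 1)) ≠ 0 := by
  induction n with
  | zero => simp [laguerre_zero] at h
  | succ n ih =>
    intro h'
    refine ih ?_ h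
    have recurrence := congrArg (aeval z) (laguerre_three_term a n)
    have coeff_ne : (n + a + 1 : ℝ) ≠ 0 := by
      linarith [n.cast_nonneg (α := ℝ)]
    simpa only [map_mul, map_sub, h, h', mul_zero, zero_sub, zero_eq_neg, aeval_C,
      map_eq_zero, mul_eq_zero, coeff_ne, false_or] using recurrence

theorem separable_laguerre (ha : -1 < a) (n : ℕ) : (laguerre a n).Separable := by
  refine (isCoprime_iff_aeval_ne_zero_of_isAlgClosed _ ℂ _ _).mpr fun z => ?_
  by_contra! h
  obtain ⟨root, root'⟩ := h
  cases n with
  | zero => simp [laguerre_zero] at root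
  | succ n =>
    have root_succ : aeval z (laguerre (a + 1) (n + 1)) = 0 := by
      rw [laguerre_add_one_eq_sub_derivative, map_sub, root, root', sub_zero]
    rw [derivative_laguerre_succ, map_neg, neg_eq_zero] at root'
    exact aeval_laguerre_succ_ne_zero (by linarith) root' root_succ

end Roots

section Factorization

variable {a : ℝ} {m k : ℕ} {c : ℂ} {x : Fin m → ℂ} {z : Fin k → ℂ}

theorem map_laguerre_eq_C_mul_prod (h : ∀ w, laguerreC a m w = c * ∏ j, (w - x j)) :
    (laguerre a m).map (algebraMap ℝ ℂ) = C c * ∏ j, (X - C (x j)) :=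
  Polynomial.funext fun w => by
    rw [eval_map_algebraMap, aeval_laguerre, h]
    simp [eval_prod]

theorem injective_of_laguerreC_eq_prod (ha : -1 < a)
    (h : ∀ w, laguerreC a m w = c * ∏ j, (w - x j)) : Function.Injective x := by
  have separable := (separable_laguerre ha m).map (f := algebraMap ℝ ℂ)
  rw [map_laguerre_eq_C_mul_prod h] at separable
  exact separable_prod_X_sub_C_iff.mp separable.of_mul_right

theorem re_pos_of_laguerreC_eq_prod (ha : -1 < a)
    (h : ∀ w, laguerreC a m w = c * ∏ j, (w - x j)) (j : Fin m) : 0 < (x j).re := by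
  refine re_pos_of_aeval_laguerre_eq_zero ha (n := m) ?_
  rw [aeval_laguerre, h, prod_eq_zero (mem_univ j) (sub_self _), mul_zero]

theorem factorial_mul_map_laguerre
    (h : ∀ w, laguerreC a m w = (-1) ^ m / (m.factorial : ℂ) * ∏ j, (w - x j)) :
    C (m.factorial : ℂ) * (laguerre a m).map (algebraMap ℝ ℂ) =
      (-1) ^ m * ∏ j, (X - C (x j)) := by
  have factorial_ne : (m.factorial : ℂ) ≠ 0 := mod_cast m.factorial_ne_zero
  rw [map_laguerre_eq_C_mul_prod h, ← mul_assoc, ← C_mul, mul_div_cancel₀ _ factorial_ne]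
  simp

theorem factorial_mul_map_laguerre_comp_neg_X
    (h : ∀ w, laguerreC a m w = (-1) ^ m / (m.factorial : ℂ) * ∏ j, (w - x j)) :
    C (m.factorial : ℂ) * ((laguerre a m).comp (-X)).map (algebraMap ℝ ℂ) =
      ∏ j, (X - C (-x j)) := by
  have reflect (j : Fin m) : -X - C (x j) = -(X - C (-x j)) := by
    rw [C_neg]
    ring
  have sign : ((-1) ^ m * (-1) ^ m : ℂ[X]) = 1 := pow_mul_pow_eq_one m (by simp)
  have := congrArg (comp · (-X)) (factorial_mul_map_laguerre h)
  simp only [mul_comp, C_comp, pow_comp, neg_comp, one_comp, Polynomial.prod_comp, sub_comp,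
    X_comp, reflect, prod_neg, card_univ, Fintype.card_fin] at this
  rw [map_comp, Polynomial.map_neg, map_X, this, ← mul_assoc, sign, one_mul]

theorem factorial_mul_map_laguerre_mul
    (hx : ∀ w, laguerreC a m w = (-1) ^ m / (m.factorial : ℂ) * ∏ j, (w - x j))
    (hz : ∀ w, laguerreC a k w = (-1) ^ k / (k.factorial : ℂ) * ∏ j, (w - z j)) :
    C (m.factorial * k.factorial : ℂ) *
      ((laguerre a m).comp (-X) * laguerre a k).map (algebraMap ℝ ℂ) =
        (-1) ^ k * ∏ j, (X - C (Fin.append (fun i => -x i) z j)) := by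
  have x_factors := factorial_mul_map_laguerre_comp_neg_X hx
  have z_factors := factorial_mul_map_laguerre hz
  simp only [Fin.prod_univ_add, Fin.append_left, Fin.append_right]
  rw [Polynomial.map_mul, C_mul, ← x_factors]
  linear_combination
    C (m.factorial : ℂ) * ((laguerre a m).comp (-X)).map (algebraMap ℝ ℂ) * z_factors

end Factorization

/-- The square matrix of order `n + 1` whose first `n` rows are the powers of the nodes `y i` and
whose last row is `v`. -/
def borderedVandermonde {R : Type*} [Monoid R] {n : ℕ} (y : Fin n → R) (v : Fin (n + 1) → R) :
    Matrix (Fin (n + 1)) (Fin (n + 1)) R :=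
  Matrix.of (Fin.snoc (fun i k => y i ^ (k : ℕ)) v)

-- Column operations by the coefficients of the monic polynomial `∏ j, (X - C (y j))` clear the
-- last column except for its bottom entry.
theorem det_borderedVandermonde {R : Type*} [CommRing R] {n : ℕ} (y : Fin n → R)
    (v : Fin (n + 1) → R) : (borderedVandermonde y v).det =
      (Matrix.vandermonde y).det * ∑ k : Fin (n + 1), (∏ j, (X - C (y j))).coeff k * v k := by
  nontriviality R
  set p : R[X] := ∏ j, (X - C (y j))
  have monic : p.Monic := monic_prod_X_sub_C y univ
  have natDegree_eq : p.natDegree = n := by simp [p]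
  have leading : p.coeff (Fin.last n) = 1 := by
    simpa [natDegree_eq] using monic.coeff_natDegree
  have column := Matrix.det_updateCol_sum (borderedVandermonde y v) (Fin.last n) (p.coeff ·)
  rw [leading, one_smul] at column
  rw [← column, Matrix.det_succ_column _ (Fin.last n), Fin.sum_univ_castSucc]
  have minor : (borderedVandermonde y v).submatrix (Fin.last n).succAbove (Fin.last n).succAbove =
      Matrix.vandermonde y := by
    ext i k
    simp [borderedVandermonde]
  have entry (i : Fin n) :
      ∑ k : Fin (n + 1), p.coeff k • borderedVandermonde y v i.castSucc k = 0 := by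
    have root : p.eval (y i) = 0 := by simp [p, eval_prod, prod_eq_zero (mem_univ i)]
    rw [eval_eq_sum_range' (by lia : p.natDegree < n + 1),
      ← Fin.sum_univ_eq_sum_range (fun k => p.coeff k * y i ^ k)] at root
    simpa [borderedVandermonde] using root
  have last_entry : ∑ k : Fin (n + 1), p.coeff k • borderedVandermonde y v (Fin.last n) k =
      ∑ k : Fin (n + 1), p.coeff k * v k := by
    simp [borderedVandermonde]
  simp only [Matrix.updateCol_self, Matrix.submatrix_updateCol_succAbove, entry, last_entry, minor,
    mul_zero, zero_mul, sum_const_zero, zero_add]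
  rw [Even.neg_one_pow ⟨_, rfl⟩, one_mul, mul_comm]

theorem det_vandermonde_mul_eval_of_X_mul_derivative_add {K : Type*} [Field K] {n : ℕ}
    (y : Fin n → K) {α β : K} (hα : ∀ k : ℕ, (k : K) + α ≠ 0) {p : K[X]}
    (h : X * derivative p + C α * p = C β * ∏ j, (X - C (y j))) (w : K) :
    (Matrix.vandermonde y).det * p.eval w =
      β * (borderedVandermonde y fun k => w ^ (k : ℕ) / ((k : ℕ) + α)).det := by
  set q : K[X] := ∏ j, (X - C (y j))
  have coeff_eq (k : ℕ) : p.coeff k = β * q.coeff k / (k + α) := by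
    have := congrArg (coeff · k) h
    simp only [coeff_add, coeff_X_mul_derivative, coeff_C_mul] at this
    rw [eq_div_iff (hα k)]
    linear_combination this
  have natDegree_lt : p.natDegree < n + 1 := by
    refine Nat.lt_succ_of_le (natDegree_le_iff_coeff_eq_zero.mpr fun k hk => ?_)
    rw [coeff_eq, coeff_eq_zero_of_natDegree_lt (by simpa [q] using hk), mul_zero, zero_div]
  rw [det_borderedVandermonde, eval_eq_sum_range' natDegree_lt, mul_left_comm,
    ← Fin.sum_univ_eq_sum_range (fun k => p.coeff k * w ^ k), Finset.mul_sum (a := β)]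
  simp only [coeff_eq, q, mul_div_assoc, mul_assoc, div_mul_eq_mul_div]

/-- The exceptional Laguerre polynomial `L^{I,(a+1)}_{m,m+k}`, with `-L^{(a+1)}_{k-1}` written as
the derivative of `L^{(a)}_k`, so that `k = 0` is not a special case. -/
noncomputable def exceptionalLaguerre (a : ℝ) (m k : ℕ) : ℝ[X] :=
  (laguerre (a + 1) m).comp (-X) * laguerre a k
    - (laguerre a m).comp (-X) * derivative (laguerre a k)

theorem aeval_exceptionalLaguerre (α : ℝ) (m k : ℕ) (w : ℂ) :
    aeval w (exceptionalLaguerre (α - 1) m k) = XLagIC m α (m + k : ℕ) w := by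
  have derivative_eq :
      aeval w (derivative (laguerre (α - 1) k)) = -laguerreC α ((k : ℤ) - 1) w := by
    cases k with
    | zero => simp [laguerreC, laguerre_zero]
    | succ k => simp [derivative_laguerre_succ, aeval_laguerre]
  simp [exceptionalLaguerre, XLagIC, aeval_comp, aeval_laguerre, derivative_eq]

theorem X_mul_derivative_exceptionalLaguerre (a : ℝ) (m k : ℕ) :
    X * derivative (exceptionalLaguerre a m k) + C (a + 1) * exceptionalLaguerre a m k =
      C (m + k + a + 1) * ((laguerre a m).comp (-X) * laguerre a k) := by
  have contiguous := congrArg (comp · (-X)) (X_mul_derivative_laguerre_add_one a m)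
  have shift := congrArg (comp · (-X)) (laguerre_add_one_eq_sub_derivative a m)
  have ode := laguerre_ode a k
  simp only [exceptionalLaguerre, derivative_sub, derivative_mul, derivative_comp, derivative_neg,
    derivative_X, add_comp, sub_comp, mul_comp, C_comp, X_comp, natCast_comp, one_comp, map_add,
    map_one, map_natCast] at contiguous shift ode ⊢
  linear_combination laguerre a k * contiguous + X * derivative (laguerre a k) * shift
    - (laguerre a m).comp (-X) * ode

theorem det_vandermonde_mul_XLagIC {α : ℝ} (hα : ∀ j : ℕ, (j : ℝ) + α ≠ 0) {m k n : ℕ}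
    (hn : n = m + k) {x : Fin m → ℂ} {z : Fin k → ℂ}
    (hx : ∀ w, laguerreC (α - 1) m w = (-1) ^ m / (m.factorial : ℂ) * ∏ j, (w - x j))
    (hz : ∀ w, laguerreC (α - 1) k w = (-1) ^ k / (k.factorial : ℂ) * ∏ j, (w - z j)) (w : ℂ) :
    let y : Fin n → ℂ := Fin.append (fun i => -x i) z ∘ Fin.cast hn
    m.factorial * k.factorial * (Matrix.vandermonde y).det * XLagIC m α n w =
      (-1) ^ k * (α + n) * (borderedVandermonde y fun j => w ^ (j : ℕ) / ((j : ℕ) + α)).det := by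
  subst hn
  intro y
  have product_eq : C (m.factorial * k.factorial : ℂ) *
      ((laguerre (α - 1) m).comp (-X) * laguerre (α - 1) k).map (algebraMap ℝ ℂ) =
        (-1) ^ k * ∏ j, (X - C (y j)) := factorial_mul_map_laguerre_mul hx hz
  set p := (exceptionalLaguerre (α - 1) m k).map (algebraMap ℝ ℂ)
  have ode : X * derivative p + C (α : ℂ) * p = C (α + (m + k : ℕ) : ℂ) *
      ((laguerre (α - 1) m).comp (-X) * laguerre (α - 1) k).map (algebraMap ℝ ℂ) := by
    have := congrArg (Polynomial.map (algebraMap ℝ ℂ))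
      (X_mul_derivative_exceptionalLaguerre (α - 1) m k)
    rw [sub_add_cancel, show m + k + (α - 1) + 1 = α + (m + k : ℕ) by push_cast; ring] at this
    simpa [p, derivative_map] using this
  have scaled_ode : X * derivative (C (m.factorial * k.factorial : ℂ) * p) +
      C (α : ℂ) * (C (m.factorial * k.factorial : ℂ) * p) =
        C ((-1) ^ k * (α + (m + k : ℕ)) : ℂ) * ∏ j, (X - C (y j)) := by
    have sign : C ((-1) ^ k : ℂ) = (-1) ^ k := by simp
    rw [derivative_C_mul, C_mul (a := (-1) ^ k), sign]
    linear_combination C (m.factorial * k.factorial : ℂ) * ode +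
      C (α + (m + k : ℕ) : ℂ) * product_eq
  have key :=
    det_vandermonde_mul_eval_of_X_mul_derivative_add y (fun j => mod_cast hα j) scaled_ode w
  rw [eval_mul, eval_C, eval_map_algebraMap, aeval_exceptionalLaguerre] at key
  rw [← key]
  ring

theorem injective_append_neg {a : ℝ} (ha : -1 < a) {m k : ℕ} {c d : ℂ} {x : Fin m → ℂ}
    {z : Fin k → ℂ} (hx : ∀ w, laguerreC a m w = c * ∏ j, (w - x j))
    (hz : ∀ w, laguerreC a k w = d * ∏ j, (w - z j)) :
    Function.Injective (Fin.append (fun i => -x i) z) := by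
  refine Fin.append_injective_iff.mpr
    ⟨neg_injective.comp (injective_of_laguerreC_eq_prod ha hx),
      injective_of_laguerreC_eq_prod ha hz, fun i j h => ?_⟩
  have x_pos := re_pos_of_laguerreC_eq_prod ha hx i
  have z_pos := re_pos_of_laguerreC_eq_prod ha hz j
  rw [← h, Complex.neg_re] at z_pos
  linarith

theorem stmt5 (m : ℕ) (α : ℝ) (hα : 0 < α) (n : ℕ) (hmn : m ≤ n)
    (x : Fin m → ℂ) (z : Fin (n - m) → ℂ)
    (hx : ∀ X : ℂ, laguerreC (α - 1) (m : ℤ) X =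
      ((-1 : ℂ) ^ m / (Nat.factorial m : ℂ)) * ∏ j, (X - x j))
    (hz : ∀ X : ℂ, laguerreC (α - 1) ((n : ℤ) - m) X =
      ((-1 : ℂ) ^ (n - m) / (Nat.factorial (n - m) : ℂ)) * ∏ j, (X - z j))
    (Xp : Fin n → ℂ)
    (hXp : Xp = fun j => Fin.append (fun i => -x i) z
      (Fin.cast (show n = m + (n - m) by omega) j))
    (M : ℂ → Matrix (Fin (n + 1)) (Fin (n + 1)) ℂ)
    (hM : ∀ w : ℂ, M w = Matrix.of fun (i k : Fin (n + 1)) =>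
      if h : (i : ℕ) < n then (Xp ⟨i, h⟩) ^ (k : ℕ)
      else w ^ (k : ℕ) / (((k : ℕ) : ℂ) + (α : ℂ))) :
    (∀ w : ℂ,
      (Nat.factorial m : ℂ) * (Nat.factorial (n - m) : ℂ) *
          (∏ i : Fin n, ∏ j ∈ Finset.Ioi i, (Xp j - Xp i)) * XLagIC m α n w =
        (-1 : ℂ) ^ (n - m) * ((α : ℂ) + n) * (M w).det) ∧
      Function.Injective Xp := by
  have hn : n = m + (n - m) := by lia
  have hα_ne (j : ℕ) : (j : ℝ) + α ≠ 0 := by positivity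
  rw [← Nat.cast_sub hmn] at hz
  have M_eq (w : ℂ) : M w = borderedVandermonde Xp fun k => w ^ (k : ℕ) / ((k : ℕ) + α) := by
    rw [hM]
    ext i k
    cases i using Fin.lastCases <;> simp [borderedVandermonde]
  subst hXp
  refine ⟨fun w => ?_, (injective_append_neg (by linarith) hx hz).comp (Fin.cast_injective hn)⟩
  rw [M_eq, ← Matrix.det_vandermonde]
  exact det_vandermonde_mul_XLagIC hα_ne hn hx hz w
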